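/- arXiv:1410.5893 — 2 statements merged into one kernel-verified Lean document; each statement's English description precedes it below -/
import Mathlib

section
/- Let T be a commutative unital ring and let λ : T → ℝ be a multiplicative seminorm on T (i.e. λ(0) = 0, λ(1) = 1, λ(x+y) ≤ λ(x)+λ(y), and λ(xy) = λ(x)λ(y) for all x, y ∈ T). Then there exist a complete normed field K (a field complete with respect to a multiplicative norm) and a unital ring homomorphism φ : T → K such that ‖φ(r)‖_K = λ(r) for all r ∈ T and the closure in K of the subfield generated by φ(T) is all of K. Moreover, such a pair (K, φ) is unique up to isometric isomorphism: if (K', φ') is another such pair, then there is a ring isomorphism θ : K → K' with ‖θ(x)‖ = ‖x‖ for all x and θ ∘ φ = φ'. -/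
/-- A complete normed field together with a unital ring homomorphism from `T`. -/
structure CompleteNormedFieldOver (T : Type) [CommRing T] where
  carrier : Type
  [normedField : NormedField carrier]
  [completeSpace : CompleteSpace carrier]
  hom : T →+* carrier

attribute [instance] CompleteNormedFieldOver.normedField
  CompleteNormedFieldOver.completeSpace

/-- `pt` realizes the multiplicative seminorm `lam` on `T`: the norm of the image of `r`
is `lam r`, and the closure of the subfield generated by the image of `T` is everything. -/
def CompleteNormedFieldOver.Realizes {T : Type} [CommRing T]
    (pt : CompleteNormedFieldOver T) (lam : T → ℝ) : Prop :=
  (∀ r : T, ‖pt.hom r‖ = lam r) ∧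
    closure ((Subfield.closure (Set.range pt.hom) : Subfield pt.carrier) : Set pt.carrier)
      = Set.univ

/-- Isometric isomorphism compatible with the structure maps. -/
def CompleteNormedFieldOver.IsoOver {T : Type} [CommRing T]
    (pt pt' : CompleteNormedFieldOver T) : Prop :=
  ∃ θ : pt.carrier ≃+* pt'.carrier,
    (∀ x : pt.carrier, ‖θ x‖ = ‖x‖) ∧ ∀ r : T, θ (pt.hom r) = pt'.hom r

/-!
The kernel `P` of a multiplicative seminorm `p` on `T` is a prime ideal, and `p` induces an absolute
value on the domain `T ⧸ P` that extends uniquely to its fraction field, the residue field `κ(P)`.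
The completion of `κ(P)` is the desired field. Conversely, a homomorphism `φ : T → K` to a complete
normed field with `‖φ r‖ = p r` has kernel `P`, so it factors through `κ(P)`; the factorization is
isometric by uniqueness of the extended absolute value, and its image is the subfield generated by
`φ(T)`. When that subfield is dense, `K` is therefore a completion of `κ(P)`.
-/

section FractionField

variable {R F S : Type*} [CommRing R] [IsDomain R] [Field F] [Algebra R F] [IsFractionRing R F]
  [Field S] [LinearOrder S]

variable (F) in
/-- The multiplicative map underlying `fractionFieldAbs`, sending `a / b` to `v a / v b`. -/
noncomputable def fractionFieldAbsHom (v : AbsoluteValue R S) : F →*₀ S :=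
  (IsLocalization.toLocalizationMap (nonZeroDivisors R) F).lift₀ v.toMonoidWithZeroHom
    fun b ↦ (v.ne_zero (nonZeroDivisors.coe_ne_zero b)).isUnit

theorem fractionFieldAbsHom_algebraMap (v : AbsoluteValue R S) (a : R) :
    fractionFieldAbsHom F v (algebraMap R F a) = v a :=
  (IsLocalization.toLocalizationMap (nonZeroDivisors R) F).lift_eq _ a

variable [IsStrictOrderedRing S]

theorem fractionFieldAbsHom_nonneg (v : AbsoluteValue R S) (x : F) :
    0 ≤ fractionFieldAbsHom F v x := by
  obtain ⟨a, b, -, rfl⟩ := IsFractionRing.div_surjective (A := R) x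
  simp only [map_div₀, fractionFieldAbsHom_algebraMap]
  exact div_nonneg (v.nonneg a) (v.nonneg b)

theorem fractionFieldAbsHom_add_le (v : AbsoluteValue R S) (x y : F) :
    fractionFieldAbsHom F v (x + y) ≤ fractionFieldAbsHom F v x + fractionFieldAbsHom F v y := by
  obtain ⟨a, b, d, hx, hy⟩ := IsLocalization.surj₂ (nonZeroDivisors R) F x y
  have hd : 0 < v d := v.pos (nonZeroDivisors.coe_ne_zero d)
  have clear_denom {z : F} {c : R} (hz : z * algebraMap R F d = algebraMap R F c) :
      fractionFieldAbsHom F v z * v d = v c := by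
    rw [← fractionFieldAbsHom_algebraMap (F := F), ← map_mul, hz, fractionFieldAbsHom_algebraMap]
  have hxy : (x + y) * algebraMap R F d = algebraMap R F (a + b) := by
    rw [add_mul, hx, hy, map_add]
  refine le_of_mul_le_mul_right ?_ hd
  rw [add_mul, clear_denom hxy, clear_denom hx, clear_denom hy]
  exact v.add_le a b

variable (F) in
/-- The extension of an absolute value on a domain to its fraction field. -/
noncomputable def fractionFieldAbs (v : AbsoluteValue R S) : AbsoluteValue F S where
  toFun := fractionFieldAbsHom F v
  map_mul' := map_mul _
  nonneg' := fractionFieldAbsHom_nonneg v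
  eq_zero' _ := map_eq_zero _
  add_le' := fractionFieldAbsHom_add_le v

theorem fractionFieldAbs_algebraMap (v : AbsoluteValue R S) (a : R) :
    fractionFieldAbs F v (algebraMap R F a) = v a :=
  fractionFieldAbsHom_algebraMap v a

end FractionField

section MulRingSeminorm

variable {T : Type*} [CommRing T]

/-- The multiplicative seminorm with underlying function `lam`; its invariance under negation,
which Mathlib makes part of the structure, is automatic. -/
def mulRingSeminormOfNonneg (lam : T → ℝ) (nonneg : ∀ x, 0 ≤ lam x) (map_zero : lam 0 = 0)
    (map_one : lam 1 = 1) (add_le : ∀ x y, lam (x + y) ≤ lam x + lam y)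
    (map_mul : ∀ x y, lam (x * y) = lam x * lam y) : MulRingSeminorm T where
  toFun := lam
  map_zero' := map_zero
  map_one' := map_one
  add_le' := add_le
  map_mul' := map_mul
  neg' x := by
    have neg_one : lam (-1) = 1 := by
      rw [← pow_eq_one_iff_of_nonneg (nonneg _) two_ne_zero, sq, ← map_mul, neg_one_mul, neg_neg,
        map_one]
    rw [← neg_one_mul, map_mul, neg_one, one_mul]

variable (p : MulRingSeminorm T)

/-- The ideal of elements on which a multiplicative seminorm vanishes. -/
def seminormKer : Ideal T where
  carrier := {x | p x = 0}
  zero_mem' := map_zero p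
  add_mem' {x y} (hx : p x = 0) (hy : p y = 0) :=
    le_antisymm ((map_add_le_add p x y).trans_eq (by rw [hx, hy, add_zero])) (apply_nonneg p _)
  smul_mem' c x (hx : p x = 0) := show p (c * x) = 0 by rw [map_mul, hx, mul_zero]

variable {p} in
theorem mem_seminormKer {x : T} : x ∈ seminormKer p ↔ p x = 0 := Iff.rfl

instance isPrime_seminormKer : (seminormKer p).IsPrime where
  ne_top' := by
    rw [Ideal.ne_top_iff_one, mem_seminormKer, map_one]
    exact one_ne_zero
  mem_or_mem' {x y} hxy := by
    rwa [mem_seminormKer, map_mul, mul_eq_zero] at hxy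

variable {p} in
theorem seminorm_eq_of_sub_mem_ker {x y : T} (h : x - y ∈ seminormKer p) : p x = p y :=
  sub_eq_zero.mp <| abs_nonpos_iff.mp <| (abs_sub_map_le_sub p x y).trans_eq h

/-- The absolute value induced by a multiplicative seminorm on the quotient by its kernel. -/
def quotientKerAbs : AbsoluteValue (T ⧸ seminormKer p) ℝ where
  toFun := Quotient.lift p fun _ _ h ↦
    seminorm_eq_of_sub_mem_ker ((Submodule.quotientRel_def _).mp h)
  map_mul' := by
    rintro ⟨x⟩ ⟨y⟩
    exact map_mul p x y
  nonneg' := by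
    rintro ⟨x⟩
    exact apply_nonneg p x
  eq_zero' := by
    rintro ⟨x⟩
    exact (Ideal.Quotient.eq_zero_iff_mem (I := seminormKer p)).symm
  add_le' := by
    rintro ⟨x⟩ ⟨y⟩
    exact map_add_le_add p x y

/-- The absolute value induced by a multiplicative seminorm on the residue field of its kernel. -/
noncomputable def residueFieldAbs : AbsoluteValue (seminormKer p).ResidueField ℝ :=
  fractionFieldAbs _ (quotientKerAbs p)

theorem residueFieldAbs_algebraMap (r : T) :
    residueFieldAbs p (algebraMap T (seminormKer p).ResidueField r) = p r :=
  fractionFieldAbs_algebraMap (quotientKerAbs p) (Ideal.Quotient.mk _ r)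

end MulRingSeminorm

section ResidueField

variable {T : Type*} [CommRing T] {P : Ideal T} [P.IsPrime]

theorem residueField_monoidHom_ext {M : Type*} [Monoid M] {f g : P.ResidueField →* M}
    (h : ∀ r : T, f (algebraMap T P.ResidueField r) = g (algebraMap T P.ResidueField r)) :
    f = g := by
  refine IsLocalization.monoidHom_ext (nonZeroDivisors (T ⧸ P)) (MonoidHom.ext fun x ↦ ?_)
  obtain ⟨r, rfl⟩ := Ideal.Quotient.mk_surjective x
  exact h r

theorem subfield_closure_range_comp_algebraMap_residueField {K : Type*} [Field K]
    (f : P.ResidueField →+* K) :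
    Subfield.closure (Set.range (f.comp (algebraMap T P.ResidueField))) = f.fieldRange := by
  have range_eq : Set.range (algebraMap T P.ResidueField) =
      Set.range (algebraMap (T ⧸ P) P.ResidueField) :=
    (Ideal.Quotient.mk_surjective (I := P)).range_comp (algebraMap (T ⧸ P) P.ResidueField)
  rw [RingHom.coe_comp, Set.range_comp, ← RingHom.map_field_closure, range_eq,
    IsFractionRing.closure_range_algebraMap, RingHom.fieldRange_eq_map]

end ResidueField

section Completion

open UniformSpace

variable {A B : Type*} [SeminormedRing A] [NormedRing B] [CompleteSpace B] {f : A →+* B}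

/-- A complete ring containing an isometric dense image of `A` is the completion of `A`. -/
noncomputable def completionRingEquiv (hf : Isometry f) (dense : DenseRange f) :
    Completion A ≃+* B :=
  RingEquiv.ofBijective hf.extensionHom <| by
    have isometry : Isometry hf.extensionHom := hf.completion_extension
    have range_subset : Set.range f ⊆ Set.range hf.extensionHom := by
      rintro _ ⟨a, rfl⟩
      exact ⟨a, hf.extensionHom_coe a⟩
    refine ⟨isometry.injective, Set.range_eq_univ.mp ?_⟩
    rw [← isometry.isClosedEmbedding.isClosed_range.closure_eq]
    exact (dense.mono range_subset).closure_eq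

theorem completionRingEquiv_coe (hf : Isometry f) (dense : DenseRange f) (a : A) :
    completionRingEquiv hf dense a = f a :=
  hf.extensionHom_coe a

theorem norm_completionRingEquiv (hf : Isometry f) (dense : DenseRange f) (x : Completion A) :
    ‖completionRingEquiv hf dense x‖ = ‖x‖ :=
  hf.completion_extension.norm_map_of_map_zero (map_zero hf.extensionHom) x

end Completion

section CompletedResidueField

open UniformSpace

variable {T : Type*} [CommRing T] (p : MulRingSeminorm T)

/-- The completed residue field of a multiplicative seminorm, written `ℋ(p)` in Berkovich
geometry. -/
abbrev CompletedResidueField : Type _ := (residueFieldAbs p).Completion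

/-- The dense embedding of the residue field into the completed residue field. -/
noncomputable def residueFieldToCompleted :
    (seminormKer p).ResidueField →+* CompletedResidueField p :=
  Completion.coeRingHom.comp (WithAbs.equiv (residueFieldAbs p)).symm.toRingHom

/-- The canonical homomorphism to the completed residue field. -/
noncomputable def toCompletedResidueField : T →+* CompletedResidueField p :=
  (residueFieldToCompleted p).comp (algebraMap T (seminormKer p).ResidueField)

theorem norm_toCompletedResidueField (r : T) : ‖toCompletedResidueField p r‖ = p r :=
  (Completion.norm_coe _).trans (residueFieldAbs_algebraMap p r)

theorem denseRange_residueFieldToCompleted : DenseRange (residueFieldToCompleted p) :=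
  Completion.denseRange_coe.comp (WithAbs.equiv (residueFieldAbs p)).symm.surjective.denseRange
    (Completion.continuous_coe _)

theorem dense_subfield_closure_range_toCompletedResidueField :
    Dense (Subfield.closure (Set.range (toCompletedResidueField p)) :
      Set (CompletedResidueField p)) := by
  rw [toCompletedResidueField, subfield_closure_range_comp_algebraMap_residueField,
    RingHom.coe_fieldRange]
  exact denseRange_residueFieldToCompleted p

variable {p} {K : Type*} [NormedField K] {φ : T →+* K}

/-- The factorization through the residue field of a homomorphism to a normed field that induces
the seminorm. -/
noncomputable def residueFieldLift (hφ : ∀ r, ‖φ r‖ = p r) : (seminormKer p).ResidueField →+* K :=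
  Ideal.ResidueField.lift _ φ
    (fun r hr ↦ by rwa [RingHom.mem_ker, ← norm_eq_zero, hφ])
    (fun r hr ↦ by
      refine IsUnit.mk0 (φ r) ?_
      rwa [← norm_ne_zero_iff, hφ])

theorem residueFieldLift_algebraMap (hφ : ∀ r, ‖φ r‖ = p r) (r : T) :
    residueFieldLift hφ (algebraMap T _ r) = φ r :=
  Ideal.ResidueField.lift_algebraMap ..

theorem norm_residueFieldLift (hφ : ∀ r, ‖φ r‖ = p r) (x : (seminormKer p).ResidueField) :
    ‖residueFieldLift hφ x‖ = residueFieldAbs p x := by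
  have norm_comp_eq : (normHom : K →*₀ ℝ).toMonoidHom.comp (residueFieldLift hφ : _ →* K) =
      (residueFieldAbs p).toMonoidHom :=
    residueField_monoidHom_ext fun r ↦ by
      change ‖residueFieldLift hφ (algebraMap T _ r)‖ = residueFieldAbs p (algebraMap T _ r)
      rw [residueFieldLift_algebraMap, hφ, residueFieldAbs_algebraMap]
  exact DFunLike.congr_fun norm_comp_eq x

theorem denseRange_residueFieldLift (hφ : ∀ r, ‖φ r‖ = p r)
    (dense : Dense (Subfield.closure (Set.range φ) : Set K)) :
    DenseRange (residueFieldLift hφ) := by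
  have factorization : (residueFieldLift hφ).comp (algebraMap T _) = φ :=
    RingHom.ext (residueFieldLift_algebraMap hφ)
  rwa [← factorization, subfield_closure_range_comp_algebraMap_residueField,
    RingHom.coe_fieldRange] at dense

theorem exists_completedResidueField_ringEquiv [CompleteSpace K] (hφ : ∀ r, ‖φ r‖ = p r)
    (dense : Dense (Subfield.closure (Set.range φ) : Set K)) :
    ∃ θ : CompletedResidueField p ≃+* K,
      (∀ x, ‖θ x‖ = ‖x‖) ∧ ∀ r, θ (toCompletedResidueField p r) = φ r := by
  let lift : WithAbs (residueFieldAbs p) →+* K :=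
    (residueFieldLift hφ).comp (WithAbs.equiv (residueFieldAbs p)).toRingHom
  have isometry : Isometry lift :=
    AddMonoidHomClass.isometry_of_norm lift fun x ↦ norm_residueFieldLift hφ x.ofAbs
  have denseRange : DenseRange lift :=
    (denseRange_residueFieldLift hφ dense).mono
      ((WithAbs.equiv (residueFieldAbs p)).surjective.range_comp (residueFieldLift hφ)).ge
  exact ⟨completionRingEquiv isometry denseRange, norm_completionRingEquiv isometry denseRange,
    fun r ↦ (completionRingEquiv_coe isometry denseRange _).trans
      (residueFieldLift_algebraMap hφ r)⟩

end CompletedResidueField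

/-- Every multiplicative seminorm on a commutative unital ring arises from a unital ring
homomorphism into a complete normed field generated (as a complete valuation field) by the
image, uniquely up to isometric isomorphism. -/
theorem exists_unique_completion_field_of_multiplicative_seminorm
    {T : Type} [CommRing T] (lam : T → ℝ)
    (hnonneg : ∀ x : T, 0 ≤ lam x)
    (h0 : lam 0 = 0) (h1 : lam 1 = 1)
    (hadd : ∀ x y : T, lam (x + y) ≤ lam x + lam y)
    (hmul : ∀ x y : T, lam (x * y) = lam x * lam y) :
    ∃ pt : CompleteNormedFieldOver T, pt.Realizes lam ∧
      ∀ pt' : CompleteNormedFieldOver T, pt'.Realizes lam → pt.IsoOver pt' := by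
  let p := mulRingSeminormOfNonneg lam hnonneg h0 h1 hadd hmul
  refine ⟨{ carrier := CompletedResidueField p, hom := toCompletedResidueField p },
    ⟨norm_toCompletedResidueField p,
      (dense_subfield_closure_range_toCompletedResidueField p).closure_eq⟩, ?_⟩
  rintro pt' ⟨norm_hom, closure_eq_univ⟩
  exact exists_completedResidueField_ringEquiv (p := p) norm_hom
    (dense_iff_closure_eq.mpr closure_eq_univ)
end

section
/- Let T be a nonzero commutative unital Banach ring, that is, a commutative ring complete with respect to a submultiplicative norm satisfying ‖1‖ = 1. Then the Berkovich spectrum ℳ(T) = {λ : T → ℝ | λ is a multiplicative seminorm on T with λ(x) ≤ ‖x‖ for all x ∈ T}, regarded as a subspace of the product space T → ℝ (topology of pointwise convergence), is nonempty and compact. -/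
/-- A multiplicative seminorm on a commutative unital ring. -/
def IsMultSeminorm {T : Type*} [CommRing T] (lam : T → ℝ) : Prop :=
  (∀ x : T, 0 ≤ lam x) ∧ lam 0 = 0 ∧ lam 1 = 1 ∧
    (∀ x y : T, lam (x + y) ≤ lam x + lam y) ∧
    (∀ x y : T, lam (x * y) = lam x * lam y)

/-- The Berkovich spectrum of a commutative unital Banach ring: the set of multiplicative
seminorms bounded by the norm, inside the product space `T → ℝ`. -/
def BerkSpec (T : Type*) [NormedCommRing T] : Set (T → ℝ) :=
  {lam | IsMultSeminorm lam ∧ ∀ x : T, lam x ≤ ‖x‖}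

/-!
Order the ring seminorms `p` with `p 1 = 1` pointwise. By compactness of a product of intervals and
Zorn's lemma there is a minimal one below any given `f ≠ 0`, and a minimal one is multiplicative.
Indeed it equals its smoothing `x ↦ lim p (x ^ n) ^ (1 / n)`, so it is power-multiplicative; hence
for `p c ≠ 0` the function `x ↦ lim p (x * c ^ n) / p c ^ n` is again a ring seminorm below `p` with
value `1` at `1`. By minimality it equals `p`, and it is multiplicative against `c` by construction.
-/

open Filter Topology

theorem exists_minimal_mem_of_isCompact {α : Type*} [Preorder α] [TopologicalSpace α]
    [ClosedIicTopology α] {K : Set α} (hK : IsCompact K) (hne : K.Nonempty) :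
    ∃ m, Minimal (· ∈ K) m := by
  have chain_bddBelow : ∀ c ⊆ K, IsChain (· ≤ ·) c → ∀ y ∈ c, ∃ b ∈ K, ∀ z ∈ c, b ≤ z := by
    intro c hcK hc y hy
    have : Nonempty c := ⟨⟨y, hy⟩⟩
    have hdir : Directed (· ⊇ ·) fun z : c ↦ Set.Iic z.1 :=
      (IsChain.directedOn (r := (· ≥ ·)) hc.symm).directed_val.mono_comp (g := Set.Iic) _
        fun _ _ ↦ Set.Iic_subset_Iic.2
    by_contra! hunbdd
    have hempty : K ∩ ⋂ z : c, Set.Iic z.1 = ∅ := by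
      ext b
      simpa using hunbdd b
    obtain ⟨z, hz⟩ := hK.elim_directed_family_closed _ (fun _ ↦ isClosed_Iic)
      hempty hdir
    exact hz.le ⟨hcK z.2, Set.mem_Iic.2 le_rfl⟩
  obtain ⟨y, hy⟩ := hne
  obtain ⟨m, -, hm⟩ := zorn_le_nonempty₀ (α := αᵒᵈ) K
    (fun c hcK hc y hy ↦ chain_bddBelow c hcK hc.symm y hy) y hy
  exact ⟨m, hm⟩

section Smoothing

variable {R : Type*} [CommRing R] (μ : RingSeminorm R)

theorem exists_map_pow_le_mul_pow_of_smoothingFun_lt (hμ1 : μ 1 ≤ 1) {x : R} {a : ℝ}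
    (h : smoothingFun μ x < a) : ∃ C > 0, ∀ n : ℕ, μ (x ^ n) ≤ C * a ^ n := by
  have ha : 0 < a := (smoothingFun_nonneg μ hμ1 x).trans_lt h
  have eventually_le : ∀ᶠ n : ℕ in atTop, μ (x ^ n) ≤ a ^ n := by
    filter_upwards [(tendsto_smoothingFun_of_map_one_le_one μ hμ1 x).eventually_lt_const h,
      eventually_ne_atTop 0] with n hroot hn
    rw [smoothingSeminormSeq, one_div] at hroot
    exact (Real.rpow_inv_natCast_pow (apply_nonneg μ _) hn).symm.trans_le (by gcongr)
  have isBigO : (fun n : ℕ ↦ μ (x ^ n)) =O[atTop] fun n ↦ a ^ n :=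
    .of_bound' <| eventually_le.mono fun n hn ↦ by
      rwa [Real.norm_of_nonneg (apply_nonneg μ _), Real.norm_of_nonneg (by positivity)]
  obtain ⟨C, hC, hbound⟩ := Asymptotics.bound_of_isBigO_nat_atTop isBigO
  refine ⟨C, hC, fun n ↦ ?_⟩
  simpa [abs_of_nonneg, ha.le] using hbound (pow_ne_zero n ha.ne')

theorem smoothingFun_le_of_forall_map_pow_le {x : R} {a C : ℝ} (ha : 0 ≤ a) (hC : 0 < C)
    (h : ∀ n : ℕ, μ (x ^ n) ≤ C * a ^ n) : smoothingFun μ x ≤ a := by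
  have tendsto_root : Tendsto (fun n : ℕ ↦ C ^ (1 / n : ℝ) * a) atTop (𝓝 a) := by
    simpa using (tendsto_const_nhds.rpow tendsto_one_div_atTop_nhds_zero_nat
      (.inl hC.ne')).mul_const a
  refine ge_of_tendsto tendsto_root ?_
  filter_upwards [eventually_gt_atTop 0] with n hn
  calc smoothingFun μ x ≤ μ (x ^ n) ^ (1 / n : ℝ) := smoothingFun_le μ x ⟨n, hn⟩
    _ ≤ (C * a ^ n) ^ (1 / n : ℝ) := by gcongr; exact h n
    _ = C ^ (1 / n : ℝ) * a := by
      rw [Real.mul_rpow hC.le (by positivity), one_div, Real.pow_rpow_inv_natCast ha hn.ne']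

theorem map_nsmul_le_nsmul_map {F E : Type*} [AddGroup E] [FunLike F E ℝ]
    [AddGroupSeminormClass F E ℝ] (q : F) (n : ℕ) (x : E) : q (n • x) ≤ n • q x := by
  induction n with
  | zero => simp
  | succ n ih =>
    rw [succ_nsmul, succ_nsmul]
    exact (map_add_le_add q _ _).trans (by gcongr)

theorem map_add_pow_le_mul_add_pow {x y : R} {a b C D : ℝ}
    (hx : ∀ n : ℕ, μ (x ^ n) ≤ C * a ^ n) (hy : ∀ n : ℕ, μ (y ^ n) ≤ D * b ^ n) (n : ℕ) :
    μ ((x + y) ^ n) ≤ C * D * (a + b) ^ n := by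
  have term_le (i j k : ℕ) : μ (x ^ i * y ^ j * k) ≤ C * a ^ i * (D * b ^ j) * k :=
    calc μ (x ^ i * y ^ j * k) = μ (k • (x ^ i * y ^ j)) := by rw [nsmul_eq_mul, mul_comm]
      _ ≤ k • μ (x ^ i * y ^ j) := map_nsmul_le_nsmul_map μ _ _
      _ = μ (x ^ i * y ^ j) * k := by rw [nsmul_eq_mul, mul_comm]
      _ ≤ C * a ^ i * (D * b ^ j) * k := by
        gcongr
        exact (map_mul_le_mul μ _ _).trans
          (mul_le_mul (hx i) (hy j) (apply_nonneg μ _) ((apply_nonneg μ _).trans (hx i)))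
  rw [add_pow, add_pow, Finset.mul_sum]
  refine (Finset.le_sum_of_subadditive μ (map_zero μ).le (map_add_le_add μ) _ _).trans ?_
  exact Finset.sum_le_sum fun i _ ↦ (term_le i (n - i) (n.choose i)).trans_eq (by ring)

theorem smoothingFun_add_le (hμ1 : μ 1 ≤ 1) (x y : R) :
    smoothingFun μ (x + y) ≤ smoothingFun μ x + smoothingFun μ y := by
  refine le_add_of_forall_lt fun a ha b hb ↦ ?_
  have ha0 : 0 ≤ a := (smoothingFun_nonneg μ hμ1 x).trans ha.le
  have hb0 : 0 ≤ b := (smoothingFun_nonneg μ hμ1 y).trans hb.le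
  obtain ⟨C, hC, hx⟩ := exists_map_pow_le_mul_pow_of_smoothingFun_lt μ hμ1 ha
  obtain ⟨D, hD, hy⟩ := exists_map_pow_le_mul_pow_of_smoothingFun_lt μ hμ1 hb
  exact smoothingFun_le_of_forall_map_pow_le μ (add_nonneg ha0 hb0) (mul_pos hC hD)
    (map_add_pow_le_mul_add_pow μ hx hy)

theorem smoothingFun_mul_le (hμ1 : μ 1 ≤ 1) (x y : R) :
    smoothingFun μ (x * y) ≤ smoothingFun μ x * smoothingFun μ y := by
  refine le_mul_of_forall_lt₀ fun a ha b hb ↦ ?_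
  have ha0 : 0 ≤ a := (smoothingFun_nonneg μ hμ1 x).trans ha.le
  have hb0 : 0 ≤ b := (smoothingFun_nonneg μ hμ1 y).trans hb.le
  obtain ⟨C, hC, hx⟩ := exists_map_pow_le_mul_pow_of_smoothingFun_lt μ hμ1 ha
  obtain ⟨D, hD, hy⟩ := exists_map_pow_le_mul_pow_of_smoothingFun_lt μ hμ1 hb
  refine smoothingFun_le_of_forall_map_pow_le μ (mul_nonneg ha0 hb0) (mul_pos hC hD) fun n ↦ ?_
  calc μ ((x * y) ^ n) ≤ μ (x ^ n) * μ (y ^ n) := mul_pow x y n ▸ map_mul_le_mul μ _ _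
    _ ≤ C * a ^ n * (D * b ^ n) := by gcongr; exacts [hx n, hy n]
    _ = C * D * (a * b) ^ n := by ring

theorem smoothingFun_neg (x : R) : smoothingFun μ (-x) = smoothingFun μ x := by
  have map_neg_pow (n : ℕ) : μ ((-x) ^ n) = μ (x ^ n) := by
    rcases n.even_or_odd with hn | hn
    · rw [hn.neg_pow]
    · rw [hn.neg_pow, map_neg_eq_map]
  simp only [smoothingFun, map_neg_pow]

/-- The smoothing `x ↦ lim μ (x ^ n) ^ (1 / n)` of `μ` as a ring seminorm. Unlike Mathlib's
`smoothingSeminorm`, it is defined without assuming that `μ` is nonarchimedean. -/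
noncomputable def smoothingRingSeminorm (hμ1 : μ 1 ≤ 1) : RingSeminorm R where
  toFun := smoothingFun μ
  map_zero' := le_antisymm ((smoothingFun_le_self μ 0).trans_eq (map_zero μ))
    (smoothingFun_nonneg μ hμ1 0)
  add_le' := smoothingFun_add_le μ hμ1
  neg' := smoothingFun_neg μ
  mul_le' := smoothingFun_mul_le μ hμ1

end Smoothing

section MinimalUnital

variable {R : Type*} [CommRing R] {p f : RingSeminorm R}

/-- `p` is minimal, for the pointwise order, among the ring seminorms taking the value `1` at `1`.
`RingSeminorm` carries no order, hence the comparison through the coercion to functions. -/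
def IsMinimalUnital (p : RingSeminorm R) : Prop :=
  MinimalFor (fun q : RingSeminorm R ↦ q 1 = 1) (fun q ↦ (q : R → ℝ)) p

theorem IsMinimalUnital.apply_eq_of_le (hp : IsMinimalUnital p) {q : RingSeminorm R}
    (hq1 : q 1 = 1) (hqp : ∀ x, q x ≤ p x) (x : R) : q x = p x :=
  (hqp x).antisymm (hp.2 hq1 hqp x)

theorem IsMinimalUnital.isPowMul (hp : IsMinimalUnital p) : IsPowMul p := by
  have hp1 : p 1 ≤ 1 := hp.1.le
  have smoothing_one : smoothingRingSeminorm p hp1 1 = 1 :=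
    (smoothingFun_of_powMul p hp1 fun n _ ↦ by rw [one_pow, hp.1, one_pow]).trans hp.1
  have smoothing_eq : ∀ x, smoothingFun p x = p x :=
    hp.apply_eq_of_le smoothing_one (smoothingFun_le_self p)
  intro x n hn
  simpa only [smoothing_eq] using isPowMul_smoothingFun p hp1 x hn

theorem IsMinimalUnital.map_mul (hp : IsMinimalUnital p) (c x : R) : p (c * x) = p c * p x := by
  by_cases hc : p c = 0
  · refine (map_mul_le_mul p c x).antisymm ?_
    rw [hc, zero_mul]
    exact apply_nonneg p _
  have hp1 : p 1 ≤ 1 := hp.1.le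
  have fromConst_eq : ∀ y, seminormFromConst' c p y = p y :=
    hp.apply_eq_of_le (q := seminormFromConst hp1 hc hp.isPowMul)
      (seminormFromConst_one hp1 hc hp.isPowMul) (seminormFromConst_le_seminorm hp1 hc hp.isPowMul)
  simpa only [fromConst_eq] using seminormFromConst_const_mul hp1 hc hp.isPowMul x

theorem exists_ringSeminorm_le_map_one_eq_one (hf : f ≠ 0) :
    ∃ p : RingSeminorm R, p 1 = 1 ∧ ∀ x, p x ≤ f x := by
  have hf_ne : (f : R → ℝ) ≠ 0 := fun h ↦ hf (RingSeminorm.ext (congrFun h))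
  have hf_nonneg : 0 ≤ (f : R → ℝ) := apply_nonneg f
  have hf_mul (x y : R) : f (x * y) ≤ 1 * f x * f y := by
    rw [one_mul]
    exact map_mul_le_mul f x y
  exact ⟨seminormFromBounded (map_zero f) hf_nonneg hf_mul (map_add_le_add f) (map_neg_eq_map f),
    seminormFromBounded_one hf_ne hf_nonneg hf_mul,
    fun x ↦ (seminormFromBounded_le hf_nonneg hf_mul x).trans_eq (one_mul _)⟩

theorem isClosed_range_coe_ringSeminorm (S : Type*) [NonUnitalRing S] :
    IsClosed (Set.range ((⇑) : RingSeminorm S → S → ℝ)) := by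
  have range_eq : Set.range ((⇑) : RingSeminorm S → S → ℝ) =
      {g | g 0 = 0} ∩ (⋂ x, ⋂ y, {g | g (x + y) ≤ g x + g y}) ∩ (⋂ x, {g | g (-x) = g x}) ∩
        ⋂ x, ⋂ y, {g | g (x * y) ≤ g x * g y} := by
    ext g
    simp only [Set.mem_inter_iff, Set.mem_iInter]
    constructor
    · rintro ⟨p, rfl⟩
      exact ⟨⟨⟨map_zero p, map_add_le_add p⟩, map_neg_eq_map p⟩, map_mul_le_mul p⟩
    · rintro ⟨⟨⟨hzero, hadd⟩, hneg⟩, hmul⟩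
      exact ⟨⟨⟨g, hzero, hadd, hneg⟩, hmul⟩, rfl⟩
  rw [range_eq]
  exact (((isClosed_eq (by fun_prop) (by fun_prop)).inter
    (isClosed_iInter fun x ↦ isClosed_iInter fun y ↦ isClosed_le (by fun_prop) (by fun_prop))).inter
    (isClosed_iInter fun x ↦ isClosed_eq (by fun_prop) (by fun_prop))).inter
    (isClosed_iInter fun x ↦ isClosed_iInter fun y ↦ isClosed_le (by fun_prop) (by fun_prop))

theorem exists_isMinimalUnital_le (hf : f ≠ 0) :
    ∃ p : RingSeminorm R, IsMinimalUnital p ∧ ∀ x, p x ≤ f x := by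
  let K : Set (R → ℝ) :=
    (Set.range ((⇑) : RingSeminorm R → R → ℝ) ∩ {g | g 1 = 1}) ∩ Set.Iic (f : R → ℝ)
  have K_isClosed : IsClosed K :=
    ((isClosed_range_coe_ringSeminorm R).inter
      (isClosed_eq (by fun_prop) (by fun_prop))).inter isClosed_Iic
  have K_subset : K ⊆ Set.Icc 0 (f : R → ℝ) := by
    rintro _ ⟨⟨⟨p, rfl⟩, -⟩, hpf⟩
    exact ⟨apply_nonneg p, hpf⟩
  obtain ⟨p₀, hp₀1, hp₀f⟩ := exists_ringSeminorm_le_map_one_eq_one hf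
  obtain ⟨_, ⟨⟨⟨p, rfl⟩, hp1⟩, hpf⟩, hmin⟩ := exists_minimal_mem_of_isCompact
    (isCompact_Icc.of_isClosed_subset K_isClosed K_subset) ⟨p₀, ⟨⟨p₀, rfl⟩, hp₀1⟩, hp₀f⟩
  exact ⟨p, ⟨hp1, fun q hq1 hqp ↦ hmin ⟨⟨⟨q, rfl⟩, hq1⟩, hqp.trans hpf⟩ hqp⟩, hpf⟩

theorem IsMinimalUnital.isMultSeminorm (hp : IsMinimalUnital p) : IsMultSeminorm p :=
  ⟨apply_nonneg p, map_zero p, hp.1, map_add_le_add p, hp.map_mul⟩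

end MinimalUnital

section BoundedMultSeminorms

theorem isClosed_setOf_isMultSeminorm (R : Type*) [CommRing R] :
    IsClosed {lam : R → ℝ | IsMultSeminorm lam} := by
  simp only [IsMultSeminorm, Set.ofPred_and, Set.ofPred_forall]
  exact (isClosed_iInter fun x ↦ isClosed_le (by fun_prop) (by fun_prop)).inter <|
    (isClosed_eq (by fun_prop) (by fun_prop)).inter <|
    (isClosed_eq (by fun_prop) (by fun_prop)).inter <|
    (isClosed_iInter fun x ↦ isClosed_iInter fun y ↦
      isClosed_le (by fun_prop) (by fun_prop)).inter <|
    isClosed_iInter fun x ↦ isClosed_iInter fun y ↦ isClosed_eq (by fun_prop) (by fun_prop)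

variable {R : Type*} [CommRing R]

theorem isCompact_setOf_isMultSeminorm_le (f : R → ℝ) :
    IsCompact {lam : R → ℝ | IsMultSeminorm lam ∧ ∀ x, lam x ≤ f x} :=
  isCompact_Icc.of_isClosed_subset ((isClosed_setOf_isMultSeminorm R).inter isClosed_Iic)
    fun _ hlam ↦ ⟨hlam.1.1, hlam.2⟩

theorem berkSpec_nonempty_and_isCompact_general {f : RingSeminorm R} (hf : f ≠ 0) :
    {lam : R → ℝ | IsMultSeminorm lam ∧ ∀ x, lam x ≤ f x}.Nonempty ∧
      IsCompact {lam : R → ℝ | IsMultSeminorm lam ∧ ∀ x, lam x ≤ f x} := by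
  obtain ⟨p, hp, hpf⟩ := exists_isMinimalUnital_le hf
  exact ⟨⟨p, hp.isMultSeminorm, hpf⟩, isCompact_setOf_isMultSeminorm_le f⟩

end BoundedMultSeminorms

/-- The Berkovich spectrum of a nonzero commutative unital Banach ring is a nonempty
compact subset of `T → ℝ` with the topology of pointwise convergence. -/
theorem berkSpec_nonempty_and_isCompact
    (T : Type*) [NormedCommRing T] [NormOneClass T] [CompleteSpace T] [Nontrivial T] :
    (BerkSpec T).Nonempty ∧ IsCompact (BerkSpec T) :=
  berkSpec_nonempty_and_isCompact_general (f := normRingSeminorm T) <|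
    RingSeminorm.ne_zero_iff.2 ⟨1, (norm_ne_zero_iff.2 one_ne_zero : ‖(1 : T)‖ ≠ 0)⟩
end
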